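/- arXiv:1107.0444 — 3 statements merged into one kernel-verified Lean document; each statement's English description precedes it below -/
import Mathlib

section
/- Let k be a field and I an index set. Let k[[x]] be the ring of formal power series over k and k((x)) the field of formal Laurent series over k, regarded as the fraction field of k[[x]]. Let Υ be the multiplicative submonoid of ∏_{i∈I} k[[x]] consisting of all tuples s = (s_i) such that each s_i is a power of x and s_i = 1 for all but finitely many i ∈ I. Let 𝔸_I be the subring of ∏_{i∈I} k((x)) consisting of all tuples f = (f_i) with f_i ∈ k[[x]] for all but finitely many i ∈ I (the I-adèle ring of k((x))). Then the componentwise inclusion ∏_{i∈I} k[[x]] → 𝔸_I exhibits 𝔸_I as the localization of the ring ∏_{i∈I} k[[x]] at the multiplicative set Υ. -/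
open Filter

variable (k : Type*) [Field k] (I : Type*)

/-- The `I`-adèle ring of `k((x))`: the subring of `∏ i ∈ I, k((x))` of tuples whose
components lie in `k[[x]]` for almost all `i`. -/
noncomputable def adeleSubringLaurent : Subring (I → LaurentSeries k) where
  carrier := {f | ∀ᶠ i in cofinite,
    f i ∈ (algebraMap (PowerSeries k) (LaurentSeries k)).range}
  mul_mem' := by
    intro a b ha hb
    have ha' : ∀ᶠ i in cofinite,
        a i ∈ (algebraMap (PowerSeries k) (LaurentSeries k)).range := ha
    have hb' : ∀ᶠ i in cofinite,
        b i ∈ (algebraMap (PowerSeries k) (LaurentSeries k)).range := hb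
    exact (ha'.and hb').mono fun _ h => mul_mem h.1 h.2
  one_mem' := by
    show ∀ᶠ i in cofinite,
      (1 : I → LaurentSeries k) i ∈ (algebraMap (PowerSeries k) (LaurentSeries k)).range
    exact Eventually.of_forall fun _ => one_mem _
  add_mem' := by
    intro a b ha hb
    have ha' : ∀ᶠ i in cofinite,
        a i ∈ (algebraMap (PowerSeries k) (LaurentSeries k)).range := ha
    have hb' : ∀ᶠ i in cofinite,
        b i ∈ (algebraMap (PowerSeries k) (LaurentSeries k)).range := hb
    exact (ha'.and hb').mono fun _ h => add_mem h.1 h.2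
  zero_mem' := by
    show ∀ᶠ i in cofinite,
      (0 : I → LaurentSeries k) i ∈ (algebraMap (PowerSeries k) (LaurentSeries k)).range
    exact Eventually.of_forall fun _ => zero_mem _
  neg_mem' := by
    intro a ha
    have ha' : ∀ᶠ i in cofinite,
        a i ∈ (algebraMap (PowerSeries k) (LaurentSeries k)).range := ha
    exact ha'.mono fun _ h => neg_mem h

theorem mem_adeleSubringLaurent {f : I → LaurentSeries k} :
    f ∈ adeleSubringLaurent k I ↔ ∀ᶠ i in cofinite,
      f i ∈ (algebraMap (PowerSeries k) (LaurentSeries k)).range :=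
  Iff.rfl

/-- The componentwise inclusion `∏ i, k[[x]] → 𝔸_I`. -/
noncomputable def toAdelesLaurent : (I → PowerSeries k) →+* adeleSubringLaurent k I :=
  RingHom.codRestrict
    (Pi.ringHom fun i => (algebraMap (PowerSeries k) (LaurentSeries k)).comp
      (Pi.evalRingHom (fun _ => PowerSeries k) i))
    (adeleSubringLaurent k I)
    (fun d => (mem_adeleSubringLaurent k I).mpr
      (Eventually.of_forall fun i => ⟨d i, rfl⟩))

/-- The multiplicative set of tuples of power series each of which is a power of `X`,
with almost all components equal to `1`. -/
noncomputable def powersOfXSubmonoid : Submonoid (I → PowerSeries k) where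
  carrier := {s | (∀ i, ∃ n : ℕ, s i = (PowerSeries.X : PowerSeries k) ^ n) ∧
    ∀ᶠ i in cofinite, s i = 1}
  mul_mem' := by
    intro a b ha hb
    have ha' : (∀ i, ∃ n : ℕ, a i = (PowerSeries.X : PowerSeries k) ^ n) ∧
        ∀ᶠ i in cofinite, a i = 1 := ha
    have hb' : (∀ i, ∃ n : ℕ, b i = (PowerSeries.X : PowerSeries k) ^ n) ∧
        ∀ᶠ i in cofinite, b i = 1 := hb
    refine ⟨fun i => ?_, (ha'.2.and hb'.2).mono fun i h => by
      simp [Pi.mul_apply, h.1, h.2]⟩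
    obtain ⟨n, hn⟩ := ha'.1 i
    obtain ⟨nn, hnn⟩ := hb'.1 i
    exact ⟨n + nn, by simp [Pi.mul_apply, hn, hnn, pow_add]⟩
  one_mem' := ⟨fun i => ⟨0, by simp⟩, Eventually.of_forall fun _ => rfl⟩

open scoped RestrictedProduct

section RestrictedProduct

variable {ι : Type*} {R S : ι → Type*} {𝓕 : Filter ι}

/-- The tuples with `i`-th component in the submonoid `M i` for every `i`, and equal to `1` along
the filter `𝓕`: the denominators of a restricted product of localizations. -/
def piEventuallyOne [∀ i, MulOneClass (R i)] (M : ∀ i, Submonoid (R i)) (𝓕 : Filter ι) :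
    Submonoid (∀ i, R i) where
  carrier := {s | (∀ i, s i ∈ M i) ∧ ∀ᶠ i in 𝓕, s i = 1}
  one_mem' := ⟨fun i => one_mem (M i), .of_forall fun _ => rfl⟩
  mul_mem' hs ht :=
    ⟨fun i => mul_mem (hs.1 i) (ht.1 i),
      (hs.2.and ht.2).mono fun i h => by simp only [Pi.mul_apply, h.1, h.2, mul_one]⟩

-- Taking `1` wherever `1` already works makes pointwise choices of denominators admissible.
theorem exists_mem_piEventuallyOne [∀ i, MulOneClass (R i)] {M : ∀ i, Submonoid (R i)}
    {P : ∀ i, R i → Prop} (hM : ∀ i, ∃ c ∈ M i, P i c) (hone : ∀ᶠ i in 𝓕, P i 1) :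
    ∃ s ∈ piEventuallyOne M 𝓕, ∀ i, P i (s i) := by
  have exists_eq_one_of_one (i : ι) : ∃ c ∈ M i, P i c ∧ (P i 1 → c = 1) := by
    by_cases h : P i 1
    · exact ⟨1, one_mem _, h, fun _ => rfl⟩
    · obtain ⟨c, hc, hPc⟩ := hM i
      exact ⟨c, hc, hPc, fun h' => absurd h' h⟩
  choose s hsM hsP hs_one using exists_eq_one_of_one
  exact ⟨s, ⟨hsM, hone.mono hs_one⟩, hsP⟩

section Monoid

variable [∀ i, Monoid (R i)] [∀ i, Monoid (S i)]

/-- The map from the full product of the `R i` to the product of the `S i` restricted to the ranges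
of the homomorphisms `f i`, obtained by applying `f i` in each component. -/
def piToRestrictedProduct (f : ∀ i, R i →* S i) (𝓕 : Filter ι) (a : ∀ i, R i) :
    Πʳ i, [S i, MonoidHom.mrange (f i)]_[𝓕] :=
  .mk (fun i => f i (a i)) (.of_forall fun i => ⟨a i, rfl⟩)

variable {M : ∀ i, Submonoid (R i)} {f : ∀ i, R i →* S i}

theorem isUnit_piToRestrictedProduct (hunit : ∀ i, ∀ c ∈ M i, IsUnit (f i c)) {s : ∀ i, R i}
    (hs : s ∈ piEventuallyOne M 𝓕) : IsUnit (piToRestrictedProduct f 𝓕 s) := by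
  have isUnit_mrangeRestrict : ∀ᶠ i in 𝓕, IsUnit ((f i).mrangeRestrict (s i)) :=
    hs.2.mono fun i hi => by simp only [hi, map_one, isUnit_one]
  exact RestrictedProduct.isUnit_of_eventually_isUnit (fun i => hunit i (s i) (hs.1 i))
    (isUnit_mrangeRestrict.mono fun i hi => ⟨⟨s i, rfl⟩, hi⟩)

theorem exists_mul_piToRestrictedProduct_eq
    (hsurj : ∀ i z, ∃ c ∈ M i, z * f i c ∈ MonoidHom.mrange (f i))
    (z : Πʳ i, [S i, MonoidHom.mrange (f i)]_[𝓕]) :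
    ∃ s ∈ piEventuallyOne M 𝓕, ∃ a,
      z * piToRestrictedProduct f 𝓕 s = piToRestrictedProduct f 𝓕 a := by
  obtain ⟨s, hs, hzs⟩ : ∃ s ∈ piEventuallyOne M 𝓕,
      ∀ i, z i * f i (s i) ∈ MonoidHom.mrange (f i) :=
    exists_mem_piEventuallyOne (fun i => hsurj i (z i))
      (z.eventually.mono fun i hi => by
        simpa only [map_one, mul_one, SetLike.mem_coe] using hi)
  choose a ha using hzs
  exact ⟨s, hs, a, RestrictedProduct.ext _ _ fun i => (ha i).symm⟩

theorem exists_mul_eq_mul_of_piToRestrictedProduct_eq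
    (hker : ∀ i a b, f i a = f i b → ∃ c ∈ M i, c * a = c * b)
    (hinj : ∀ᶠ i in 𝓕, Function.Injective (f i)) {a b : ∀ i, R i}
    (hab : piToRestrictedProduct f 𝓕 a = piToRestrictedProduct f 𝓕 b) :
    ∃ s ∈ piEventuallyOne M 𝓕, s * a = s * b := by
  have hfab (i : ι) : f i (a i) = f i (b i) := DFunLike.congr_fun hab i
  obtain ⟨s, hs, hsab⟩ : ∃ s ∈ piEventuallyOne M 𝓕, ∀ i, s i * a i = s i * b i :=
    exists_mem_piEventuallyOne (fun i => hker i _ _ (hfab i))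
      (hinj.mono fun i hi => congrArg (1 * ·) (hi (hfab i)))
  exact ⟨s, hs, funext hsab⟩

end Monoid

theorem stmt_2_general [∀ i, CommMonoid (R i)] [∀ i, CommMonoid (S i)]
    {M : ∀ i, Submonoid (R i)} {f : ∀ i, R i →* S i} (hf : ∀ i, (M i).IsLocalizationMap (f i))
    (hinj : ∀ᶠ i in 𝓕, Function.Injective (f i)) :
    (piEventuallyOne M 𝓕).IsLocalizationMap (piToRestrictedProduct f 𝓕) where
  map_units s := isUnit_piToRestrictedProduct (fun i c hc => (hf i).map_units ⟨c, hc⟩) s.2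
  surj z := by
    obtain ⟨s, hs, a, h⟩ := exists_mul_piToRestrictedProduct_eq (M := M) (fun i w => by
      obtain ⟨⟨b, c⟩, hbc⟩ := (hf i).surj w
      exact ⟨c, c.2, b, hbc.symm⟩) z
    exact ⟨(a, ⟨s, hs⟩), h⟩
  exists_of_eq hab := by
    obtain ⟨s, hs, h⟩ := exists_mul_eq_mul_of_piToRestrictedProduct_eq (M := M) (fun i a b h => by
      obtain ⟨c, hc⟩ := (hf i).exists_of_eq h
      exact ⟨c, c.2, hc⟩) hinj hab
    exact ⟨⟨s, hs⟩, h⟩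

end RestrictedProduct

theorem powersOfXSubmonoid_eq_piEventuallyOne :
    powersOfXSubmonoid k I =
      piEventuallyOne (fun _ => Submonoid.powers (PowerSeries.X : PowerSeries k)) cofinite :=
  Submonoid.ext fun _ => and_congr_left' <| forall_congr' fun _ => exists_congr fun _ => eq_comm

/-- For a field `k` and an index set `I`, the `I`-adèle ring `𝔸_I` of the
Laurent series field `k((x))` is the localization of the product ring `∏ i ∈ I, k[[x]]` at the
multiplicative set of tuples that are componentwise powers of `x` and almost everywhere `1`. -/
theorem stmt_2 :
    @IsLocalization (I → PowerSeries k) _ (powersOfXSubmonoid k I)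
      (adeleSubringLaurent k I) _ (toAdelesLaurent k I).toAlgebra := by
  let := (toAdelesLaurent k I).toAlgebra
  rw [isLocalization_iff_isLocalizationMap, powersOfXSubmonoid_eq_piEventuallyOne]
  -- `adeleSubringLaurent k I` and the restricted product in `stmt_2_general` are the same subtype.
  exact stmt_2_general (f := fun _ => (algebraMap (PowerSeries k) (LaurentSeries k)).toMonoidHom)
    (fun _ => (isLocalization_iff_isLocalizationMap _ _).mp inferInstance)
    (.of_forall fun _ => IsFractionRing.injective _ _)
end

section
/- Let k be a field and p(x) ∈ k[x] an irreducible polynomial. Then the (p(x))-adic completion of k[x], that is, the inverse limit of the rings k[x]/(p(x)^n) over n ∈ ℕ, is isomorphic as a ring to the formal power series ring k_{p(x)}[[t]] in one variable t over the residue field k_{p(x)} := k[x]/(p(x)). -/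
/-!
The residue field `K = k[x]/(p)` need not be separable over `k`, but it is formally smooth over the
prime field of `k`, which is perfect: for finitely generated fields this is the existence of a
separating transcendence basis, and the obstruction `H¹` of the cotangent complex commutes with
directed unions. Hence the projection of the completion `S` onto `K` has a section `K → S`. It makes
`S` a `K`-algebra, and substituting `p` for `t` is a `K`-algebra map `K⟦t⟧ → S`; it is surjective
because it is so modulo `t` and both sides are complete, and injective because `p` is regular.
-/

section FormallySmooth

open MvPolynomial KaehlerDifferential TensorProduct

lemma subsingleton_h1Cotangent_iff_mem_ker_sq {F A σ : Type*} [CommRing F] [CommRing A]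
    [Algebra F A] {v : σ → A} (hv : Function.Surjective (aeval (R := F) v)) :
    Subsingleton (Algebra.H1Cotangent F A) ↔
      ∀ f : MvPolynomial σ F, aeval v f = 0 → (∀ i, aeval v (pderiv i f) = 0) →
        f ∈ RingHom.ker (aeval (R := F) v) ^ 2 := by
  let : Algebra (MvPolynomial σ F) A := (aeval (R := F) v).toAlgebra
  have algebraMap_eq (f) : algebraMap (MvPolynomial σ F) A f = aeval (R := F) v f := rfl
  have : IsScalarTower F (MvPolynomial σ F) A := .of_algebraMap_eq' (aeval v).comp_algebraMap.symm
  have one_tmul_D_eq_zero_iff (f : MvPolynomial σ F) :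
      (1 : A) ⊗ₜ[MvPolynomial σ F] D F (MvPolynomial σ F) f = 0 ↔
        ∀ i, aeval v (pderiv i f) = 0 := by
    rw [← ((mvPolynomialBasis F σ).baseChange A).repr.map_eq_zero_iff, Finsupp.ext_iff]
    simp only [Module.Basis.baseChange_repr_tmul, mvPolynomialBasis_repr_apply,
      Algebra.smul_def, mul_one, algebraMap_eq, Finsupp.coe_zero, Pi.zero_apply]
  rw [← Algebra.FormallySmooth.kerCotangentToTensor_injective_iff (P := MvPolynomial σ F) hv,
    injective_iff_map_eq_zero]
  constructor
  · intro h f hf hdf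
    have hf_ker : f ∈ RingHom.ker (algebraMap (MvPolynomial σ F) A) := hf
    refine (Ideal.toCotangent_eq_zero _ ⟨f, hf_ker⟩).1 (h _ ?_)
    rw [kerCotangentToTensor_toCotangent]
    exact (one_tmul_D_eq_zero_iff f).2 hdf
  · intro h y hy
    obtain ⟨⟨f, hf⟩, rfl⟩ := Ideal.toCotangent_surjective _ y
    rw [kerCotangentToTensor_toCotangent] at hy
    exact (Ideal.toCotangent_eq_zero _ _).2 (h f hf ((one_tmul_D_eq_zero_iff f).1 hy))

lemma subsingleton_h1Cotangent_of_forall_finset_subset {F A : Type*} [CommRing F] [CommRing A]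
    [Algebra F A] (h : ∀ s : Finset A, ∃ E : Subalgebra F A, (s : Set A) ⊆ E ∧
      Subsingleton (Algebra.H1Cotangent F E)) :
    Subsingleton (Algebra.H1Cotangent F A) := by
  have aeval_id_surjective (B : Type _) [CommRing B] [Algebra F B] :
      Function.Surjective (aeval (R := F) (id : B → B)) := fun b => ⟨X b, aeval_X _ b⟩
  rw [subsingleton_h1Cotangent_iff_mem_ker_sq (aeval_id_surjective A)]
  intro f hf hdf
  obtain ⟨E, hfE, hE⟩ := h f.vars
  rw [subsingleton_h1Cotangent_iff_mem_ker_sq (aeval_id_surjective E)] at hE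
  let ι : MvPolynomial E F →ₐ[F] MvPolynomial A F := rename Subtype.val
  have aeval_ι (g : MvPolynomial E F) : aeval id (ι g) = (aeval (R := F) id g : E) := by
    rw [aeval_rename]
    exact (comp_aeval_apply (φ := E.val) id g).symm
  obtain ⟨g, rfl⟩ : ∃ g, ι g = f :=
    exists_rename_eq_of_vars_subset_range f Subtype.val Subtype.val_injective
      fun a ha => ⟨⟨a, hfE ha⟩, rfl⟩
  have hg : g ∈ RingHom.ker (aeval (R := F) (id : E → E)) ^ 2 := by
    refine hE g (Subtype.val_injective ?_) fun i => Subtype.val_injective ?_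
    · rw [← aeval_ι, hf, ZeroMemClass.coe_zero]
    · rw [← aeval_ι, ← pderiv_rename Subtype.val_injective, hdf, ZeroMemClass.coe_zero]
  have map_ker_le : (RingHom.ker (aeval (R := F) (id : E → E))).map ι ≤
      RingHom.ker (aeval (R := F) (id : A → A)) := by
    rw [Ideal.map_le_iff_le_comap]
    intro z hz
    rw [Ideal.mem_comap, RingHom.mem_ker, aeval_ι, RingHom.mem_ker.1 hz, ZeroMemClass.coe_zero]
  exact Ideal.pow_right_mono map_ker_le 2 (Ideal.map_pow ι _ 2 ▸ Ideal.mem_map_of_mem ι hg)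

lemma formallySmooth_of_perfectField (F L : Type*) [Field F] [PerfectField F] [Field L]
    [Algebra F L] : Algebra.FormallySmooth F L := by
  refine ⟨inferInstance, subsingleton_h1Cotangent_of_forall_finset_subset fun s => ?_⟩
  let E := IntermediateField.adjoin F (s : Set L)
  have : Algebra.EssFiniteType F E :=
    IntermediateField.essFiniteType_iff.2 (IntermediateField.fg_adjoin_finset s)
  have : Algebra.FormallySmooth F E := inferInstance
  exact ⟨E.toSubalgebra, IntermediateField.subset_adjoin F _, this.subsingleton_h1Cotangent⟩

lemma perfectField_bot_subfield (k : Type*) [Field k] : PerfectField (⊥ : Subfield k) := by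
  obtain ⟨q, _⟩ := CharP.exists k
  rcases CharP.char_is_prime_or_zero k q with hq | rfl
  · have : Fact q.Prime := ⟨hq⟩
    let := Subfield.fintypeBot k q
    infer_instance
  · have : CharZero k := CharP.charP_to_charZero k
    infer_instance

end FormallySmooth

section PowerSeries

open PowerSeries

variable {K S : Type*} [CommRing K] [CommRing S] [Algebra K S]

variable (K) in
lemma exists_powerSeries_algHom_X_eq {I : Ideal S} [IsAdicComplete I S] {a : S} (ha : a ∈ I) :
    ∃ Φ : K⟦X⟧ →ₐ[K] S, Φ X = a := by
  let : UniformSpace K := ⊥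
  have : DiscreteTopology K := ⟨rfl⟩
  let : WithIdeal S := ⟨I⟩
  obtain ⟨_, _⟩ : CompleteSpace S ∧ T2Space S :=
    (show IsAdic I from rfl).isAdicComplete_iff.1 inferInstance
  have : ContinuousSMul K S := DiscreteTopology.instContinuousSMul K S
  have hasEval_a : HasEval a := WithIdeal.isTopologicallyNilpotent_of_mem ha
  exact ⟨aeval hasEval_a, by rw [← Polynomial.coe_X, aeval_coe, Polynomial.aeval_X]⟩

variable {a : S} {π : S →ₐ[K] K}

lemma augmentation_powerSeries_algHom {Φ : K⟦X⟧ →ₐ[K] S} (hπ : π (Φ X) = 0) (φ : K⟦X⟧) :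
    π (Φ φ) = constantCoeff φ := by
  conv_lhs => rw [φ.eq_X_mul_shift_add_const]
  rw [map_add, map_add, map_mul, map_mul, hπ, zero_mul, zero_add]
  exact (π.comp Φ).commutes _

lemma powerSeries_algHom_injective {Φ : K⟦X⟧ →ₐ[K] S} (hΦ : Φ X ∈ nonZeroDivisors S)
    (hπ : π (Φ X) = 0) : Function.Injective Φ := by
  rw [injective_iff_map_eq_zero]
  intro φ hφ
  have map_divXPowOrder : Φ φ.divXPowOrder = 0 := by
    rw [← X_pow_order_mul_divXPowOrder (f := φ), map_mul, map_pow] at hφ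
    exact (mul_left_mem_nonZeroDivisors_eq_zero_iff (pow_mem hΦ _)).1 hφ
  rw [← constantCoeff_divXPowOrder_eq_zero_iff, ← augmentation_powerSeries_algHom hπ,
    map_divXPowOrder, map_zero]

lemma powerSeries_algHom_surjective {Φ : K⟦X⟧ →ₐ[K] S} [IsHausdorff (Ideal.span {Φ X}) S]
    (hπ : RingHom.ker π = Ideal.span {Φ X}) : Function.Surjective Φ := by
  have map_span_X : (Ideal.span {(X : K⟦X⟧)}).map Φ.toRingHom = RingHom.ker π := by
    rw [Ideal.map_span, Set.image_singleton, hπ]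
    rfl
  have : IsHausdorff ((Ideal.span {(X : K⟦X⟧)}).map Φ.toRingHom) S := by rwa [map_span_X, hπ]
  refine surjective_of_mk_map_comp_surjective (I := Ideal.span {X}) Φ.toRingHom fun y => ?_
  obtain ⟨s, rfl⟩ := Ideal.Quotient.mk_surjective y
  refine ⟨algebraMap K K⟦X⟧ (π s), ?_⟩
  rw [RingHom.comp_apply, Ideal.Quotient.mk_eq_mk_iff_sub_mem, map_span_X, RingHom.mem_ker,
    map_sub, sub_eq_zero]
  exact (π.comp Φ).commutes (π s)

theorem nonempty_powerSeries_algEquiv_of_ker_eq_span [IsAdicComplete (Ideal.span {a}) S]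
    (ha : a ∈ nonZeroDivisors S) (hπ : RingHom.ker π = Ideal.span {a}) :
    Nonempty (K⟦X⟧ ≃ₐ[K] S) := by
  obtain ⟨Φ, rfl⟩ := exists_powerSeries_algHom_X_eq K (Ideal.mem_span_singleton_self a)
  have hΦX : π (Φ X) = 0 := by
    rw [← RingHom.mem_ker, hπ]
    exact Ideal.mem_span_singleton_self _
  exact ⟨.ofBijective Φ ⟨powerSeries_algHom_injective ha hΦX, powerSeries_algHom_surjective hπ⟩⟩

end PowerSeries

section AdicCompletion

open AdicCompletion (evalOneₐ evalₐ evalₐ_mk)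

variable {R : Type*} [CommRing R] {p : R}

lemma algebraMap_adicCompletion_mem_nonZeroDivisors (hp : p ∈ nonZeroDivisors R) :
    algebraMap R (AdicCompletion (Ideal.span {p}) R) p ∈
      nonZeroDivisors (AdicCompletion (Ideal.span {p}) R) := by
  rw [mem_nonZeroDivisors_iff_right]
  intro x hx
  obtain ⟨y, rfl⟩ := AdicCompletion.mk_surjective _ _ x
  refine AdicCompletion.ext_evalₐ fun n => ?_
  have pow_succ_dvd : p ^ (n + 1) ∣ y.val (n + 1) * p := by
    have eval_hx := congr(evalₐ (Ideal.span {p}) (n + 1) $hx)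
    rwa [map_mul, AlgHom.commutes, evalₐ_mk, map_zero, Ideal.Quotient.algebraMap_eq,
      ← map_mul, Ideal.Quotient.eq_zero_iff_mem, Ideal.span_singleton_pow,
      Ideal.mem_span_singleton] at eval_hx
  have pow_dvd : p ^ n ∣ y.val (n + 1) := by
    rwa [pow_succ, dvd_cancel_right_mem_nonZeroDivisors hp] at pow_succ_dvd
  rwa [evalₐ_mk, map_zero, ← AdicCompletion.Ideal.mk_eq_mk _ n.le_succ,
    Ideal.Quotient.eq_zero_iff_mem, Ideal.span_singleton_pow, Ideal.mem_span_singleton]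

theorem nonempty_adicCompletion_algEquiv_powerSeries (F : Type*) [CommRing F] [Algebra F R]
    [Algebra.FormallySmooth F (R ⧸ Ideal.span {p})] (hp : p ∈ nonZeroDivisors R) :
    Nonempty (AdicCompletion (Ideal.span {p}) R ≃ₐ[F] PowerSeries (R ⧸ Ideal.span {p})) := by
  let I := Ideal.span {p}
  have I_fg : I.FG := Submodule.fg_span_singleton p
  obtain ⟨lift, evalOneₐ_comp_lift⟩ :=
    Algebra.FormallySmooth.exists_adicCompletionEvalOneₐ_comp_eq (AlgHom.id F (R ⧸ I))
  let : Algebra (R ⧸ I) (AdicCompletion I R) := lift.toAlgebra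
  have : IsScalarTower F (R ⧸ I) (AdicCompletion I R) :=
    .of_algebraMap_eq' lift.comp_algebraMap.symm
  let π : AdicCompletion I R →ₐ[R ⧸ I] R ⧸ I :=
    { evalOneₐ I with commutes' := DFunLike.congr_fun evalOneₐ_comp_lift }
  have map_I : I.map (algebraMap R (AdicCompletion I R)) = Ideal.span {algebraMap R _ p} := by
    rw [Ideal.map_span, Set.image_singleton]
  have ker_π : RingHom.ker π = Ideal.span {algebraMap R _ p} :=
    (AdicCompletion.ker_evalOneₐ_eq_map I I_fg).trans map_I
  have : IsAdicComplete (Ideal.span {algebraMap R (AdicCompletion I R) p})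
      (AdicCompletion I R) := by
    rw [← map_I, IsAdicComplete.map_algebraMap_iff]
    exact AdicCompletion.isAdicComplete I_fg
  obtain ⟨e⟩ := nonempty_powerSeries_algEquiv_of_ker_eq_span
    (algebraMap_adicCompletion_mem_nonZeroDivisors hp) ker_π
  exact ⟨(e.restrictScalars F).symm⟩

end AdicCompletion

theorem stmt_3_general (k : Type*) {R : Type*} [Field k] [CommRing R] [Algebra k R] {p : R}
    (hp : p ∈ nonZeroDivisors R) (hmax : (Ideal.span {p}).IsMaximal) :
    Nonempty (AdicCompletion (Ideal.span {p}) R ≃+* PowerSeries (R ⧸ Ideal.span {p})) := by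
  let : Field (R ⧸ Ideal.span {p}) := Ideal.Quotient.field _
  have := perfectField_bot_subfield k
  have := formallySmooth_of_perfectField (⊥ : Subfield k) (R ⧸ Ideal.span {p})
  obtain ⟨e⟩ := nonempty_adicCompletion_algEquiv_powerSeries (⊥ : Subfield k) hp
  exact ⟨e.toRingEquiv⟩

/-- For a field `k` and an irreducible polynomial `p ∈ k[x]`, the
`(p)`-adic completion of `k[x]` (the inverse limit of the rings `k[x]/(pⁿ)`) is isomorphic
as a ring to the formal power series ring over the residue field `k[x]/(p)`. -/
theorem stmt_3 (k : Type*) [Field k] (p : Polynomial k) (hp : Irreducible p) :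
    Nonempty (AdicCompletion (Ideal.span {p}) (Polynomial k) ≃+*
      PowerSeries (Polynomial k ⧸ Ideal.span {p})) :=
  stmt_3_general k (mem_nonZeroDivisors_of_ne_zero hp.ne_zero)
    (PrincipalIdealRing.isMaximal_of_irreducible hp)
end

section
/- Let k be a field and let R be the Kronecker algebra, realized as the subring of the 2×2 matrix ring M_2(k[x]) over the polynomial ring k[x] consisting of all matrices of the form ((a, c + d·x), (0, b)) with a, b, c, d ∈ k, i.e. upper triangular matrices whose diagonal entries are constants and whose (1,2)-entry is a polynomial of degree at most 1. Then the inclusion R ↪ M_2(k[x]) is an injective epimorphism in the category of rings; that is, any two ring homomorphisms from M_2(k[x]) to a ring T that agree on R are equal. -/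
open Polynomial

/-- The Kronecker algebra realized as the subring of `M_2(k[x])` of matrices
`((a, c + d·x), (0, b))` with `a, b, c, d ∈ k`. -/
noncomputable def Kronecker (k : Type*) [Field k] :
    Subring (Matrix (Fin 2) (Fin 2) (Polynomial k)) where
  carrier := {A | ∃ a b c d : k,
    A 0 0 = C a ∧ A 1 1 = C b ∧ A 0 1 = C c + C d * X ∧ A 1 0 = 0}
  mul_mem' := by
    rintro A B ⟨a, b, c, d, hA00, hA11, hA01, hA10⟩ ⟨a', b', c', d', hB00, hB11, hB01, hB10⟩
    refine ⟨a * a', b * b', a * c' + c * b', a * d' + d * b', ?_, ?_, ?_, ?_⟩ <;>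
      simp only [Matrix.mul_apply, Fin.sum_univ_two, hA00, hA11, hA01, hA10,
        hB00, hB11, hB01, hB10] <;> ring_nf <;> simp [map_mul, map_add] <;> ring
  one_mem' := by
    refine ⟨1, 1, 0, 0, ?_, ?_, ?_, ?_⟩ <;> simp [Matrix.one_apply]
  add_mem' := by
    rintro A B ⟨a, b, c, d, hA00, hA11, hA01, hA10⟩ ⟨a', b', c', d', hB00, hB11, hB01, hB10⟩
    refine ⟨a + a', b + b', c + c', d + d', ?_, ?_, ?_, ?_⟩ <;>
      simp only [Matrix.add_apply, hA00, hA11, hA01, hA10, hB00, hB11, hB01, hB10,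
        map_add] <;> ring
  zero_mem' := ⟨0, 0, 0, 0, by simp, by simp, by simp, rfl⟩
  neg_mem' := by
    rintro A ⟨a, b, c, d, hA00, hA11, hA01, hA10⟩
    refine ⟨-a, -b, -c, -d, ?_, ?_, ?_, ?_⟩ <;>
      simp only [Matrix.neg_apply, hA00, hA11, hA01, hA10, map_neg, neg_zero] <;> ring

/-!
In any ring containing the matrix units, `e₁₀` is the only `y` with `e₀₁ y = e₀₀`, `y e₀₁ = e₁₁` and
`y e₀₁ y = y`, so two homomorphisms agreeing on `e₀₀`, `e₀₁` and `e₁₁` also agree on `e₁₀`. The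
scalar matrix `x` is `(x e₀₁) e₁₀ + e₁₀ (x e₀₁)`, and together with the constant scalar matrices and
the matrix units it generates `M_2(k[x])`.
-/

theorem map_eq_of_mul_mul_eq_self {F M N : Type*} [Mul M] [Semigroup N] [FunLike F M N]
    [MulHomClass F M N] {f g : F} {a b : M} (hbab : b * a * b = b) (ha : f a = g a)
    (hab : f (a * b) = g (a * b)) (hba : f (b * a) = g (b * a)) : f b = g b :=
  calc
    f b = f (b * a) * f b := by rw [← map_mul, hbab]
    _ = g b * (f a * f b) := by rw [hba, map_mul, ha, mul_assoc]
    _ = g b * (g a * g b) := by rw [← map_mul f, hab, map_mul]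
    _ = g b := by rw [← mul_assoc, ← map_mul, ← map_mul, hbab]

section MatrixUnits

open Matrix

variable {n A T : Type*} [Fintype n] [DecidableEq n] [Semiring A] [Semiring T]
  {f g : Matrix n n A →+* T}

theorem map_single_one_swap {i j : n} (hij : f (single i j 1) = g (single i j 1))
    (hi : f (single i i 1) = g (single i i 1)) (hj : f (single j j 1) = g (single j j 1)) :
    f (single j i 1) = g (single j i 1) :=
  map_eq_of_mul_mul_eq_self (a := single i j 1) (by simp only [single_mul_single_same, mul_one])
    hij (by simpa only [single_mul_single_same, mul_one] using hi)
    (by simpa only [single_mul_single_same, mul_one] using hj)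

theorem map_single_one_eq_of_forall_le [LinearOrder n]
    (hle : ∀ i j, i ≤ j → f (single i j 1) = g (single i j 1)) (i j : n) :
    f (single i j 1) = g (single i j 1) := by
  rcases le_total i j with hij | hji
  · exact hle i j hij
  · exact map_single_one_swap (hle j i hji) (hle j j le_rfl) (hle i i le_rfl)

theorem scalar_eq_sum_single_mul_single_mul_single (i j : n) (x : A) :
    scalar n x = ∑ l, single l i 1 * single i j x * single j l 1 := by
  simp only [single_mul_single_same, one_mul, mul_one, sum_single_eq_diagonal, scalar_apply]

theorem map_scalar_eq_of_map_single_eq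
    (hunits : ∀ i j, f (single i j 1) = g (single i j 1)) {i j : n} {x : A}
    (hx : f (single i j x) = g (single i j x)) : f (scalar n x) = g (scalar n x) := by
  simp only [scalar_eq_sum_single_mul_single_mul_single i j x, map_sum, map_mul, hunits, hx]

theorem matrix_ringHom_ext (hscalar : f.comp (scalar n) = g.comp (scalar n))
    (hunits : ∀ i j, f (single i j 1) = g (single i j 1)) : f = g := by
  have hsingle (i j : n) (x : A) : f (single i j x) = g (single i j x) := by
    have hx : f (scalar n x) = g (scalar n x) := RingHom.congr_fun hscalar x
    have hfactor : single i j x = single i j 1 * scalar n x := by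
      ext
      simp [mul_diagonal, single_apply]
    rw [hfactor, map_mul, map_mul, hunits, hx]
  refine RingHom.coe_addMonoidHom_injective <| ext_addMonoidHom fun i j => ?_
  exact AddMonoidHom.ext fun x => hsingle i j x

end MatrixUnits

theorem stmt_9_general {k T : Type*} [Semiring k] [Semiring T]
    {f g : Matrix (Fin 2) (Fin 2) k[X] →+* T}
    (hfg : ∀ a b c d : k,
      f !![C a, C c + C d * X; 0, C b] = g !![C a, C c + C d * X; 0, C b]) : f = g := by
  have hupper (i j : Fin 2) (hij : i ≤ j) : f (.single i j 1) = g (.single i j 1) := by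
    rw [Matrix.eta_fin_two (.single i j 1)]
    fin_cases i <;> fin_cases j
    · simpa using hfg 1 0 0 0
    · simpa using hfg 0 0 1 0
    · simp at hij
    · simpa using hfg 0 1 0 0
  have hunits := map_single_one_eq_of_forall_le hupper
  have hX : f (.single 0 1 X) = g (.single 0 1 X) := by
    rw [Matrix.eta_fin_two (.single 0 1 X)]
    simpa using hfg 0 0 0 1
  have hC (a : k) : f (.scalar (Fin 2) (C a)) = g (.scalar (Fin 2) (C a)) := by
    rw [Matrix.eta_fin_two (.scalar (Fin 2) (C a))]
    simpa using hfg a a 0 0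
  exact matrix_ringHom_ext (ringHom_ext hC (map_scalar_eq_of_map_single_eq hunits hX)) hunits

/-- **Statement 9.** For a field `k`, the inclusion of the Kronecker algebra into
`M_2(k[x])` is an injective epimorphism in the category of rings: the inclusion is
injective, and any two ring homomorphisms out of `M_2(k[x])` that agree on the Kronecker
algebra are equal. -/
theorem stmt_9 (k : Type*) [Field k] :
    Function.Injective (Kronecker k).subtype ∧
    ∀ (T : Type*) [Ring T] (g h : Matrix (Fin 2) (Fin 2) (Polynomial k) →+* T),
      (∀ A ∈ Kronecker k, g A = h A) → g = h :=
  ⟨Subtype.val_injective, fun _ _ _ _ hgh => stmt_9_general fun a b c d =>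
    hgh _ ⟨a, b, c, d, rfl, rfl, rfl, rfl⟩⟩
end
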